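/- arXiv:2503.12615 — 5 statements merged into one kernel-verified Lean document; each statement's English description precedes it below -/
import Mathlib

section
/- Let N, s, M be natural numbers with N = s·M and s, M > 0, let π : ZMod N → ZMod M be the reduction homomorphism, let B ⊆ ZMod N be fiber-injective for π, let h_s : ZMod N → ℂ satisfy 𝓕_N h_s (m) = 0 for every m ∉ B, and let σ : ZMod N → ℂ satisfy 𝓕_N σ = s·1_B. For any H : ZMod N → ℂ define the low-resolution kernel h := ↓_s(σ ⋆ H) : ZMod M → ℂ. Then for every X : ZMod N → ℂ, the circular convolution on ZMod M of ↓_s(h_s ⋆ X) with h equals ↓_s(h_s ⋆ (X ⋆ H)); that is, applying alias-free subsampling with anti-aliasing filter h_s to X and then convolving with h gives the same result as subsampling the high-resolution blurred image X ⋆ H. -/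
open ZMod Finset

noncomputable section

/-- Circular convolution on `ZMod N`: `(f ⋆ g)(n) = ∑ m, f m * g (n - m)`. -/
def cconv {N : ℕ} [NeZero N] (f g : ZMod N → ℂ) : ZMod N → ℂ :=
  fun n => ∑ m : ZMod N, f m * g (n - m)

/-- Decimation operator `↓_s : (ZMod N → ℂ) → (ZMod M → ℂ)`, `(↓_s f)(k) = f (s * k.val)`. -/
def decim (N M s : ℕ) (f : ZMod N → ℂ) : ZMod M → ℂ :=
  fun k => f ((s * k.val : ℕ) : ZMod N)

/-- `B` is fiber-injective for `π` if each fiber of `π` contains at most one element of `B`. -/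
def FiberInj {N M : ℕ} (π : ZMod N → ZMod M) (B : Set (ZMod N)) : Prop :=
  ∀ x ∈ B, ∀ y ∈ B, π x = π y → x = y

lemma dft_cconv_aux {N : ℕ} [NeZero N] (f g : ZMod N → ℂ) (k : ZMod N) :
    𝓕 (cconv f g) k = 𝓕 f k * 𝓕 g k := by
  simp only [dft_apply, cconv, smul_eq_mul, Finset.mul_sum, Finset.sum_mul]
  rw [Finset.sum_comm]
  conv_rhs => rw [Finset.sum_comm]
  refine Finset.sum_congr rfl fun m _ => ?_
  refine Fintype.sum_equiv (Equiv.subRight m) _ _ fun j => ?_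
  have : -(j * k) = -(m * k) + -((j - m) * k) := by ring
  rw [this, AddChar.map_add_eq_mul]
  simp only [Equiv.subRight_apply]
  ring

lemma inv_aux {N : ℕ} [NeZero N] (f : ZMod N → ℂ) (n : ZMod N) :
    f n = (N : ℂ)⁻¹ * ∑ k : ZMod N, stdAddChar (k * n) * 𝓕 f k := by
  conv_lhs => rw [← (dft (N := N) (E := ℂ)).symm_apply_apply f]
  rw [invDFT_apply]
  simp only [smul_eq_mul]

lemma char_aux {N s M : ℕ} [NeZero N] [NeZero M] (hs : 0 < s) (hN : N = s * M) (hd : M ∣ N)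
    (j : ZMod N) (m : ZMod M) :
    (stdAddChar (j * ((s * m.val : ℕ) : ZMod N)) : ℂ)
      = stdAddChar (ZMod.castHom hd (ZMod M) j * m) := by
  obtain ⟨a, rfl⟩ := ZMod.intCast_surjective j
  have h1 : ((a : ZMod N) * ((s * m.val : ℕ) : ZMod N)) = ((a * (s * m.val : ℕ) : ℤ) : ZMod N) := by
    push_cast; ring
  have h2 : ZMod.castHom hd (ZMod M) (a : ZMod N) * m = ((a * m.val : ℤ) : ZMod M) := by
    rw [map_intCast]; push_cast; simp
  rw [h1, h2, stdAddChar_coe, stdAddChar_coe]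
  congr 1
  have : (s : ℂ) ≠ 0 := by exact_mod_cast hs.ne'
  have hM : (M : ℂ) ≠ 0 := NeZero.ne _
  have hN' : (N : ℂ) = s * M := by rw [hN]; push_cast; rfl
  rw [hN']
  push_cast
  field_simp

lemma orth_aux {M : ℕ} [NeZero M] (t : ZMod M) :
    ∑ i : ZMod M, (stdAddChar (t * i) : ℂ) = if t = 0 then (M : ℂ) else 0 := by
  split_ifs with h
  · simp [h, ZMod.card]
  · exact AddChar.sum_eq_zero_of_ne_one (isPrimitive_stdAddChar M h)

/-- Alias-free subsampling of `X` followed by convolution with the equivalent low-resolution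
kernel `h = ↓_s (σ ⋆ H)` agrees with alias-free subsampling of the blurred image `X ⋆ H`. -/
theorem subsample_conv_eq (N s M : ℕ) [NeZero N] [NeZero M] (hs : 0 < s) (hM : 0 < M) (hN : N = s * M)
    (B : Set (ZMod N))
    (hB : FiberInj (ZMod.castHom (show M ∣ N from ⟨s, by rw [hN]; ring⟩) (ZMod M)) B)
    (h_s : ZMod N → ℂ) (hhs : ∀ m : ZMod N, m ∉ B → 𝓕 h_s m = 0)
    (σ : ZMod N → ℂ)
    (hσ : ∀ m : ZMod N, 𝓕 σ m = (s : ℂ) * Set.indicator B (1 : ZMod N → ℂ) m)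
    (H : ZMod N → ℂ) :
    ∀ X : ZMod N → ℂ,
      cconv (decim N M s (cconv h_s X)) (decim N M s (cconv σ H))
        = decim N M s (cconv h_s (cconv X H)) := by
  intro X
  have hd : M ∣ N := ⟨s, by rw [hN]; ring⟩
  have hN' : (N : ℂ) = s * M := by rw [hN]; push_cast; rfl
  have hs0 : (s : ℂ) ≠ 0 := by exact_mod_cast hs.ne'
  have hM0 : (M : ℂ) ≠ 0 := NeZero.ne _
  have dec : ∀ (f : ZMod N → ℂ) (n : ZMod M), decim N M s f n
      = (N : ℂ)⁻¹ * ∑ k : ZMod N, stdAddChar (ZMod.castHom hd (ZMod M) k * n) * 𝓕 f k := by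
    intro f n
    unfold decim
    rw [inv_aux f]
    simp only [char_aux hs hN hd]
  funext n
  have key : ∀ k l : ZMod N,
      ∑ m : ZMod M, (stdAddChar (ZMod.castHom hd (ZMod M) k * m) * (𝓕 h_s k * 𝓕 X k)) *
        (stdAddChar (ZMod.castHom hd (ZMod M) l * (n - m)) * (𝓕 σ l * 𝓕 H l))
      = if k = l then (N : ℂ) * (stdAddChar (ZMod.castHom hd (ZMod M) k * n) *
          (𝓕 h_s k * (𝓕 X k * 𝓕 H k))) else 0 := by
    intro k l
    have e : ∀ m : ZMod M,
        (stdAddChar (ZMod.castHom hd (ZMod M) k * m) * (𝓕 h_s k * 𝓕 X k)) *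
        (stdAddChar (ZMod.castHom hd (ZMod M) l * (n - m)) * (𝓕 σ l * 𝓕 H l))
        = (stdAddChar (ZMod.castHom hd (ZMod M) l * n) * (𝓕 h_s k * 𝓕 X k) * (𝓕 σ l * 𝓕 H l)) *
          stdAddChar ((ZMod.castHom hd (ZMod M) k - ZMod.castHom hd (ZMod M) l) * m) := by
      intro m
      have h3 : (stdAddChar (ZMod.castHom hd (ZMod M) k * m) : ℂ) *
          stdAddChar (ZMod.castHom hd (ZMod M) l * (n - m)) =
          stdAddChar (ZMod.castHom hd (ZMod M) l * n) *
          stdAddChar ((ZMod.castHom hd (ZMod M) k - ZMod.castHom hd (ZMod M) l) * m) := by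
        rw [← AddChar.map_add_eq_mul, ← AddChar.map_add_eq_mul]
        congr 1
        ring
      linear_combination (𝓕 h_s k * 𝓕 X k) * (𝓕 σ l * 𝓕 H l) * h3
    rw [Finset.sum_congr rfl fun m _ => e m, ← Finset.mul_sum, orth_aux, hσ]
    by_cases hk : k ∈ B
    · by_cases hkl : k = l
      · subst hkl
        simp only [sub_self, if_true, Set.indicator_of_mem hk, Pi.one_apply, hN']
        ring
      · rw [if_neg hkl]
        by_cases hl : l ∈ B
        · rw [if_neg, mul_zero]
          intro h
          exact hkl (hB k hk l hl (sub_eq_zero.mp h))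
        · simp [Set.indicator_of_notMem hl]
    · simp [hhs k hk]
  rw [dec]
  simp only [cconv.eq_1 (decim N M s _), dec, dft_cconv_aux]
  have : ∀ m : ZMod M, ((N : ℂ)⁻¹ * ∑ k : ZMod N, stdAddChar (ZMod.castHom hd (ZMod M) k * m) *
        (𝓕 h_s k * 𝓕 X k)) * ((N : ℂ)⁻¹ * ∑ l : ZMod N,
        stdAddChar (ZMod.castHom hd (ZMod M) l * (n - m)) * (𝓕 σ l * 𝓕 H l))
      = (N : ℂ)⁻¹ * ((N : ℂ)⁻¹ * ∑ k : ZMod N, ∑ l : ZMod N,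
        (stdAddChar (ZMod.castHom hd (ZMod M) k * m) * (𝓕 h_s k * 𝓕 X k)) *
        (stdAddChar (ZMod.castHom hd (ZMod M) l * (n - m)) * (𝓕 σ l * 𝓕 H l))) := by
    intro m
    rw [← Finset.sum_mul_sum]
    ring
  rw [Finset.sum_congr rfl fun m _ => this m, ← Finset.mul_sum, ← Finset.mul_sum, Finset.sum_comm]
  congr 1
  rw [Finset.sum_congr rfl fun k _ => Finset.sum_comm]
  simp only [key, Finset.sum_ite_eq, Finset.mem_univ, if_true]
  rw [← Finset.mul_sum, inv_mul_cancel_left₀ (NeZero.ne _)]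

end
end

section
/- Let N, s, M be natural numbers with N = s·M and s, M > 0. For every f : ZMod N → ℂ and every k : ZMod M, the discrete Fourier transform of the decimated signal satisfies 𝓕_M(↓_s f)(k) = (1/s) · ∑_{m : ZMod N, π m = k} 𝓕_N f (m); that is, the DFT of the s-fold decimation of f equals 1/s times the periodization P_s of the DFT of f (the aliasing formula). -/
open ZMod Finset

noncomputable section

/-- Periodization operator: `(P_s w)(k) = ∑_{m : π m = k} w m`. -/
def periodize {N M : ℕ} [NeZero N] (π : ZMod N → ZMod M) (w : ZMod N → ℂ) : ZMod M → ℂ :=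
  fun k => ∑ m ∈ Finset.univ.filter (fun m : ZMod N => π m = k), w m

lemma stdAddChar_decim_aux (N s M : ℕ) [NeZero N] [NeZero M] (hs : 0 < s)
    (hN : N = s * M) (h : M ∣ N) (m : ZMod N) (j : ZMod M) :
    stdAddChar (m * ((s * j.val : ℕ) : ZMod N)) = stdAddChar (j * ZMod.castHom h (ZMod M) m) := by
  have h1 : m * ((s * j.val : ℕ) : ZMod N) = (((m.val * (s * j.val) : ℕ) : ℤ) : ZMod N) := by
    simp
  have h2 : j * ZMod.castHom h (ZMod M) m = (((j.val * m.val : ℕ) : ℤ) : ZMod M) := by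
    simp [ZMod.natCast_val]
  rw [h1, h2, stdAddChar_coe, stdAddChar_coe]
  have hs' : (s : ℂ) ≠ 0 := by exact_mod_cast hs.ne'
  have hM' : (M : ℂ) ≠ 0 := by exact_mod_cast NeZero.ne M
  have hN' : (N : ℂ) = s * M := by exact_mod_cast hN
  rw [hN']
  congr 1
  push_cast
  field_simp

/-- Aliasing formula: the DFT of the `s`-fold decimation of `f` is `1/s` times the
periodization of the DFT of `f`. -/
theorem dft_decim (N s M : ℕ) [NeZero N] [NeZero M] (hs : 0 < s) (hM : 0 < M)
    (hN : N = s * M) (f : ZMod N → ℂ) (k : ZMod M) :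
    𝓕 (decim N M s f) k
      = (1 / (s : ℂ)) *
        periodize (ZMod.castHom (show M ∣ N from ⟨s, by rw [hN]; ring⟩) (ZMod M)) (𝓕 f) k := by
  have h : M ∣ N := ⟨s, by rw [hN]; ring⟩
  have key : decim N M s f
      = 𝓕⁻ ((1 / (s : ℂ)) • periodize (ZMod.castHom h (ZMod M)) (𝓕 f)) := by
    obtain ⟨g, rfl⟩ : ∃ g, f = 𝓕⁻ g := ⟨𝓕 f, by simp⟩
    have hs' : (s : ℂ) ≠ 0 := by exact_mod_cast hs.ne'
    have hM' : (M : ℂ) ≠ 0 := by exact_mod_cast NeZero.ne M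
    have hN' : (N : ℂ) = s * M := by exact_mod_cast hN
    funext j
    rw [LinearEquiv.apply_symm_apply, _root_.map_smul]
    simp only [decim, Pi.smul_apply, invDFT_apply, periodize, smul_eq_mul]
    rw [← mul_assoc, hN', mul_inv, one_div]
    congr 1
    simp only [stdAddChar_decim_aux N s M hs hN h]
    rw [← Finset.sum_fiberwise (s := Finset.univ) (g := ZMod.castHom h (ZMod M))]
    refine Finset.sum_congr rfl fun k _ => ?_
    rw [Finset.mul_sum]
    refine Finset.sum_congr rfl fun m hm => ?_
    rw [(Finset.mem_filter.mp hm).2, mul_comm j k]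
  rw [key, LinearEquiv.apply_symm_apply]
  rfl

end
end

section
/- Let N, s be natural numbers with 0 < s and 2·s ∣ N, let M = N / s, and let π : ZMod N → ZMod M be the reduction homomorphism. Then the centered band B_{s,N} = {j : ZMod N | j.val < N/(2s) ∨ N − N/(2s) ≤ j.val} is a transversal for π: every fiber π⁻¹(k), k : ZMod M, contains exactly one element of B_{s,N}. -/
open ZMod Finset

noncomputable section

/-- The centered band `B_{s,N} = {j : ZMod N | j.val < N/(2s) ∨ N − N/(2s) ≤ j.val}`. -/
def band (s N : ℕ) : Set (ZMod N) :=
  {j : ZMod N | j.val < N / (2 * s) ∨ N - N / (2 * s) ≤ j.val}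

theorem band_aux (N M m s : ℕ) (hs : 0 < s) (hN : N = 2 * m * s) (hM : M = 2 * m) (h : M ∣ N)
    (k : ZMod M) : ∃! j : ZMod N, (j.val < m ∨ N - m ≤ j.val) ∧
      ZMod.castHom h (ZMod M) j = k := by
  rcases Nat.eq_zero_or_pos m with rfl | hm
  · obtain rfl : N = 0 := by simpa using hN
    obtain rfl : M = 0 := by simpa using hM
    refine ⟨k, ⟨Or.inr (by simp), by simp⟩, ?_⟩
    rintro j ⟨-, hj⟩
    simpa using hj
  · have hMpos : 0 < M := by omega
    have hNpos : 0 < N := by subst hN; positivity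
    haveI : NeZero M := ⟨hMpos.ne'⟩
    haveI : NeZero N := ⟨hNpos.ne'⟩
    have hle : M ≤ N := Nat.le_of_dvd hNpos h
    have hsub : M ∣ N - M := Nat.dvd_sub h dvd_rfl
    have hk := ZMod.val_lt k
    have hz : ((N - M : ℕ) : ZMod M) = 0 := (ZMod.natCast_eq_zero_iff _ _).2 hsub
    have huniq : ∀ j : ZMod N, ZMod.castHom h (ZMod M) j = k → j.val % M = k.val := by
      intro j hj
      rw [← hj, ← ZMod.val_natCast, ZMod.castHom_apply, ZMod.cast_eq_val]
    have hlow : ∀ j : ZMod N, j.val < m → j.val % M = j.val := fun j hj =>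
      Nat.mod_eq_of_lt (by omega)
    have hhigh : ∀ j : ZMod N, N - m ≤ j.val → j.val % M = j.val - (N - M) := by
      intro j hj
      have hjN := ZMod.val_lt j
      obtain ⟨c, hc⟩ := hsub
      have e : j.val = (j.val - (N - M)) + M * c := by omega
      conv_lhs => rw [e]
      rw [Nat.add_mul_mod_self_left]
      exact Nat.mod_eq_of_lt (by omega)
    apply existsUnique_of_exists_of_unique
    · by_cases hkm : k.val < m
      · refine ⟨(k.val : ZMod N), ⟨Or.inl ?_, ?_⟩⟩
        · rwa [ZMod.val_natCast_of_lt (by omega)]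
        · rw [map_natCast, ZMod.natCast_zmod_val]
      · refine ⟨((N - M + k.val : ℕ) : ZMod N), ⟨Or.inr ?_, ?_⟩⟩
        · rw [ZMod.val_natCast_of_lt (by omega)]; omega
        · rw [map_natCast, Nat.cast_add, hz, zero_add, ZMod.natCast_zmod_val]
    · rintro a b ⟨ha, ha'⟩ ⟨hb, hb'⟩
      apply ZMod.val_injective N
      have h1 := huniq a ha'
      have h2 := huniq b hb'
      have a1 := hlow a
      have a2 := hhigh a
      have b1 := hlow b
      have b2 := hhigh b
      have := ZMod.val_lt a
      have := ZMod.val_lt b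
      generalize a.val % M = x at *
      generalize b.val % M = y at *
      omega

/-- The centered band `B_{s,N}` is a transversal for the reduction map
`ZMod N → ZMod (N/s)`: every fiber contains exactly one element of the band. -/
theorem band_isTransversal (N s : ℕ) (hs : 0 < s) (hdvd : 2 * s ∣ N) :
    ∀ k : ZMod (N / s),
      ∃! j : ZMod N, j ∈ band s N ∧
        ZMod.castHom
          (show N / s ∣ N from
            Nat.div_dvd_of_dvd (dvd_trans ⟨2, mul_comm 2 s⟩ hdvd))
          (ZMod (N / s)) j = k := by
  intro k
  obtain ⟨m, hm⟩ := hdvd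
  have h1 : N / (2 * s) = m := by rw [hm]; exact Nat.mul_div_cancel_left _ (by omega)
  have h2 : N / s = 2 * m := by
    rw [hm, show 2 * s * m = s * (2 * m) by ring]; exact Nat.mul_div_cancel_left _ hs
  have := band_aux N (N / s) m s hs (by rw [hm]; ring) h2
    (Nat.div_dvd_of_dvd (dvd_trans ⟨2, mul_comm 2 s⟩ ⟨m, hm⟩)) k
  simpa only [band, Set.mem_setOf_eq, h1] using this

end
end

section
/- Let N, a, b be natural numbers with 0 < a, 0 < b, and 2·a·b ∣ N. Let β_{b,N} : ZMod (N/b) → ZMod N be the section of the centered band B_{b,N} (a transversal for the reduction ZMod N → ZMod (N/b)), let β_{a,N/b} : ZMod (N/(a·b)) → ZMod (N/b) be the section of the centered band B_{a,N/b}, and let β_{ab,N} : ZMod (N/(a·b)) → ZMod N be the section of the centered band B_{ab,N}. Then the sections compose: for every k : ZMod (N/(a·b)), β_{b,N}(β_{a,N/b}(k)) = β_{ab,N}(k). -/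
open ZMod Finset

noncomputable section

theorem band_rep (s N m : ℕ) (hs : 0 < s) (hm : 0 < m) (hN : N = 2 * s * m) (j : ZMod N)
    (hj : j ∈ band s N) : ∃ z : ℤ, -(m : ℤ) ≤ z ∧ z < m ∧ (z : ZMod N) = j := by
  have hpos : 0 < N := by rw [hN]; positivity
  haveI : NeZero N := ⟨hpos.ne'⟩
  have hd : N / (2 * s) = m := by rw [hN]; exact Nat.mul_div_cancel_left m (by positivity)
  have hlt := ZMod.val_lt j
  have hj' : j.val < N / (2 * s) ∨ N - N / (2 * s) ≤ j.val := hj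
  rw [hd] at hj'
  rcases hj' with h | h
  · exact ⟨j.val, by omega, by omega, by simp⟩
  · exact ⟨(j.val : ℤ) - N, by omega, by omega, by simp⟩

theorem int_rep_unique (M m : ℕ) (hM : M = 2 * m) (x y : ℤ) (hx : -(m : ℤ) ≤ x) (hx' : x < m)
    (hy : -(m : ℤ) ≤ y) (hy' : y < m) (h : (x : ZMod M) = (y : ZMod M)) : x = y := by
  rw [ZMod.intCast_eq_intCast_iff_dvd_sub] at h
  have := Int.eq_zero_of_abs_lt_dvd h (by rw [abs_lt]; constructor <;> omega)
  omega

theorem castHom_inj_of_eq (M N : ℕ) (h : M ∣ N) (e : M = N) :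
    Function.Injective (ZMod.castHom h (ZMod M)) := by
  subst e
  intro x y hxy
  simpa using hxy

/-- The sections of the centered bands compose:
`β_{b,N} ∘ β_{a,N/b} = β_{ab,N}`. -/
theorem band_sections_comp (N a b : ℕ) (ha : 0 < a) (hb : 0 < b) (hdvd : 2 * a * b ∣ N)
    (βb : ZMod (N / b) → ZMod N)
    (hβb : ∀ k : ZMod (N / b), βb k ∈ band b N ∧
      ZMod.castHom
        (show N / b ∣ N from Nat.div_dvd_of_dvd (dvd_trans ⟨2 * a, by ring⟩ hdvd))
        (ZMod (N / b)) (βb k) = k)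
    (βa : ZMod (N / (a * b)) → ZMod (N / b))
    (hβa : ∀ k : ZMod (N / (a * b)), βa k ∈ band a (N / b) ∧
      ZMod.castHom
        (show N / (a * b) ∣ N / b by
          have hbN : b ∣ N := dvd_trans ⟨2 * a, by ring⟩ hdvd
          have haNb : a ∣ N / b :=
            (Nat.dvd_div_iff_mul_dvd hbN).mpr (dvd_trans ⟨2, by ring⟩ hdvd)
          have h1 : N / (a * b) = N / b / a := by
            rw [Nat.div_div_eq_div_mul, mul_comm]
          rw [h1]
          exact Nat.div_dvd_of_dvd haNb)
        (ZMod (N / (a * b))) (βa k) = k)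
    (βab : ZMod (N / (a * b)) → ZMod N)
    (hβab : ∀ k : ZMod (N / (a * b)), βab k ∈ band (a * b) N ∧
      ZMod.castHom
        (show N / (a * b) ∣ N from Nat.div_dvd_of_dvd (dvd_trans ⟨2, by ring⟩ hdvd))
        (ZMod (N / (a * b))) (βab k) = k) :
    ∀ k : ZMod (N / (a * b)), βb (βa k) = βab k := by
  intro k
  obtain ⟨m, rfl⟩ := hdvd
  have e1 : 2 * a * b * m / b = 2 * (a * m) := by
    rw [show 2 * a * b * m = b * (2 * (a * m)) by ring]; exact Nat.mul_div_cancel_left _ hb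
  have e2 : 2 * a * b * m / (a * b) = 2 * m := by
    rw [show 2 * a * b * m = (a * b) * (2 * m) by ring]
    exact Nat.mul_div_cancel_left _ (by positivity)
  obtain ⟨hb1, hb2⟩ := hβb (βa k)
  obtain ⟨ha1, ha2⟩ := hβa k
  obtain ⟨hc1, hc2⟩ := hβab k
  rcases Nat.eq_zero_or_pos m with hm | hm
  · apply castHom_inj_of_eq _ _ (show 2 * a * b * m / (a * b) ∣ 2 * a * b * m by
      rw [e2]; exact ⟨a * b, by ring⟩) (by rw [e2, hm]; simp)
    rw [hc2]
    refine Eq.trans ?_ ha2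
    conv_rhs => rw [← hb2]
    rw [← RingHom.comp_apply, ZMod.castHom_comp]
  · obtain ⟨y, hy, hy', ey⟩ := band_rep b _ (a * m) hb (by positivity) (by ring) _ hb1
    obtain ⟨x, hx, hx', ex⟩ := band_rep a _ m ha hm (by rw [e1]; ring) _ ha1
    obtain ⟨z, hz, hz', ez⟩ := band_rep (a * b) _ m (by positivity) hm (by ring) _ hc1
    rw [← ey, map_intCast, ← ex] at hb2
    rw [← ex, map_intCast] at ha2
    rw [← ez, map_intCast] at hc2
    have hle : m ≤ a * m := Nat.le_mul_of_pos_left m ha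
    have h1 := int_rep_unique _ (a * m) e1 y x hy hy' (by omega) (by omega) hb2
    have h2 := int_rep_unique _ m e2 x z hx hx' hz hz' (ha2.trans hc2.symm)
    rw [← ey, ← ez, h1, h2]

end
end

section
/- Let N, a, b be natural numbers with 0 < a, 0 < b, and 2·a·b ∣ N. Let σ_{b} : ZMod N → ℂ satisfy 𝓕_N σ_{b} = b·1_{B_{b,N}}, let σ_{a} : ZMod (N/b) → ℂ satisfy 𝓕_{N/b} σ_{a} = a·1_{B_{a,N/b}}, and let σ_{ab} : ZMod N → ℂ satisfy 𝓕_N σ_{ab} = (a·b)·1_{B_{ab,N}}, where the B's are the centered bands. Then Shannon subsampling composes: for every X : ZMod N → ℂ, ↓_a(σ_{a} ⋆ ↓_b(σ_{b} ⋆ X)) = ↓_{a·b}(σ_{ab} ⋆ X) as functions ZMod (N/(a·b)) → ℂ. -/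
open ZMod Finset

noncomputable section

lemma aux_char (N M b : ℕ) [NeZero N] [NeZero M] (h : N = b * M) (x : ZMod M) (j : ZMod N) :
    stdAddChar (((b * x.val : ℕ) : ZMod N) * j) = stdAddChar (x * (j.val : ZMod M)) := by
  have h1 : ((b * x.val : ℕ) : ZMod N) * j = (((b * x.val * j.val : ℕ) : ℤ) : ZMod N) := by
    push_cast; simp
  have h2 : x * (j.val : ZMod M) = (((x.val * j.val : ℕ) : ℤ) : ZMod M) := by
    push_cast; simp
  rw [h1, h2, stdAddChar_coe, stdAddChar_coe]
  have hN : (N : ℂ) ≠ 0 := NeZero.ne _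
  have hM : (M : ℂ) ≠ 0 := NeZero.ne _
  have hN' : (N : ℂ) = b * M := by exact_mod_cast h
  have hb : (b : ℂ) ≠ 0 := by
    intro hb; apply hN; rw [hN', hb, zero_mul]
  congr 1
  rw [hN']
  push_cast
  field_simp

lemma aux_band (N M a b q : ℕ) [NeZero N] [NeZero M] (ha : 0 < a) (hb : 0 < b)
    (hN : N = 2 * a * b * q) (hM : M = 2 * a * q) (j : ZMod N) :
    j ∈ band b N ∧ ((j.val : ℕ) : ZMod M) ∈ band a M ↔ j ∈ band (a * b) N := by
  have e1 : N / (2 * b) = a * q := by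
    rw [hN, show 2 * a * b * q = (a * q) * (2 * b) by ring]; exact Nat.mul_div_cancel _ (by lia)
  have e2 : M / (2 * a) = q := by
    rw [hM]; exact Nat.mul_div_cancel_left _ (by lia)
  have e3 : N / (2 * (a * b)) = q := by
    rw [hN, show 2 * a * b * q = q * (2 * (a * b)) by ring]
    exact Nat.mul_div_cancel _ (by positivity)
  simp only [band, Set.mem_ofPred_eq, e1, e2, e3, ZMod.val_natCast]
  have hj := ZMod.val_lt j
  generalize j.val = v at *
  have hq : q ≤ a * q := Nat.le_mul_of_pos_left q ha
  have hq0 : 0 < q := by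
    rcases Nat.eq_zero_or_pos q with h | h
    · subst h; lia
    · exact h
  obtain ⟨c, rfl⟩ : ∃ c, b = c + 1 := ⟨b - 1, by lia⟩
  have hN' : N = M * c + 2 * (a * q) := by rw [hN, hM]; ring
  have hM' : M = 2 * (a * q) := by rw [hM]; ring
  have hlow : v < a * q → v % M = v := fun h => Nat.mod_eq_of_lt (by lia)
  have hhigh : N - a * q ≤ v → v % M = v - M * c := by
    intro h
    have : v = (v - M * c) + M * c := by lia
    rw [this, Nat.add_mul_mod_self_left, Nat.mod_eq_of_lt (by lia)]; lia
  generalize a * q = t at *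
  generalize M * c = u at *
  generalize v % M = w at *
  clear hN hM
  constructor
  · rintro ⟨h1 | h1, h2⟩
    · have := hlow h1; lia
    · have := hhigh h1; lia
  · rintro (h1 | h1)
    · have := hlow (by lia); lia
    · have := hhigh (by lia); lia

lemma aux_inv {N : ℕ} [NeZero N] (f : ZMod N → ℂ) (n : ZMod N) :
    f n = (N : ℂ)⁻¹ * ∑ j : ZMod N, stdAddChar (j * n) * 𝓕 f j := by
  have := invDFT_apply (𝓕 f) n
  simpa using this

lemma aux_kernel (N M a b q : ℕ) [NeZero N] [NeZero M] (ha : 0 < a) (hb : 0 < b)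
    (hN : N = 2 * a * b * q) (hM : M = 2 * a * q)
    (σb : ZMod N → ℂ)
    (hσb : ∀ m : ZMod N,
      𝓕 σb m = (b : ℂ) * Set.indicator (band b N) (1 : ZMod N → ℂ) m)
    (σa : ZMod M → ℂ)
    (hσa : ∀ m : ZMod M,
      𝓕 σa m = (a : ℂ) * Set.indicator (band a M) (1 : ZMod M → ℂ) m)
    (σab : ZMod N → ℂ)
    (hσab : ∀ m : ZMod N,
      𝓕 σab m = ((a : ℂ) * (b : ℂ)) * Set.indicator (band (a * b) N) (1 : ZMod N → ℂ) m)
    (n : ZMod N) :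
    ∑ m : ZMod M, σa m * σb (n - ((b * m.val : ℕ) : ZMod N)) = σab n := by
  have hNM : N = b * M := by rw [hN, hM]; ring
  rw [aux_inv σab n]
  have : ∀ m : ZMod M, σa m * σb (n - ((b * m.val : ℕ) : ZMod N)) =
      ∑ j : ZMod N, (N : ℂ)⁻¹ * (stdAddChar (j * n) * 𝓕 σb j *
        (stdAddChar (-(m * (j.val : ZMod M))) * σa m)) := by
    intro m
    rw [aux_inv σb, Finset.mul_sum, Finset.mul_sum]
    refine Finset.sum_congr rfl fun j _ => ?_
    rw [mul_sub, sub_eq_add_neg, AddChar.map_add_eq_mul, AddChar.map_neg_eq_inv,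
      AddChar.map_neg_eq_inv, mul_comm j ((b * m.val : ℕ) : ZMod N), aux_char N M b hNM]
    ring
  rw [Finset.sum_congr rfl fun m _ => this m, Finset.sum_comm, Finset.mul_sum]
  refine Finset.sum_congr rfl fun j _ => ?_
  rw [← Finset.mul_sum, ← Finset.mul_sum]
  have hd : ∑ m : ZMod M, stdAddChar (-(m * (j.val : ZMod M))) * σa m
      = 𝓕 σa (j.val : ZMod M) := by
    rw [dft_apply]; rfl
  rw [hd, hσa, hσb, hσab]
  have hB := aux_band N M a b q ha hb hN hM j
  clear this hσa hσb hσab hd hN hM hNM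
  classical
  rw [Set.indicator_apply, Set.indicator_apply, Set.indicator_apply]
  simp only [← hB, Pi.one_apply]
  by_cases h1 : j ∈ band b N <;> by_cases h2 : ((j.val : ℕ) : ZMod M) ∈ band a M <;>
    simp only [h1, h2, and_true, and_false, if_true, if_false] <;> ring

lemma aux_cast (N M b : ℕ) [NeZero N] [NeZero M] (h : N = b * M) (x m : ZMod M) :
    ((b * (x - m).val : ℕ) : ZMod N) = ((b * x.val : ℕ) : ZMod N) - ((b * m.val : ℕ) : ZMod N) := by
  rw [eq_sub_iff_add_eq, ← Nat.cast_add, ← mul_add, ZMod.natCast_eq_natCast_iff, h]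
  apply Nat.ModEq.mul_left'
  rw [← ZMod.natCast_eq_natCast_iff]
  simp

/-- Shannon subsampling composes: subsampling by `b` then by `a` equals subsampling by `a·b`. -/
theorem shannon_subsample_comp (N a b : ℕ) [NeZero N] [NeZero (N / b)]
    (ha : 0 < a) (hb : 0 < b) (hdvd : 2 * a * b ∣ N)
    (σb : ZMod N → ℂ)
    (hσb : ∀ m : ZMod N,
      𝓕 σb m = (b : ℂ) * Set.indicator (band b N) (1 : ZMod N → ℂ) m)
    (σa : ZMod (N / b) → ℂ)
    (hσa : ∀ m : ZMod (N / b),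
      𝓕 σa m = (a : ℂ) * Set.indicator (band a (N / b)) (1 : ZMod (N / b) → ℂ) m)
    (σab : ZMod N → ℂ)
    (hσab : ∀ m : ZMod N,
      𝓕 σab m = ((a : ℂ) * (b : ℂ)) * Set.indicator (band (a * b) N) (1 : ZMod N → ℂ) m) :
    ∀ X : ZMod N → ℂ,
      decim (N / b) (N / (a * b)) a (cconv σa (decim N (N / b) b (cconv σb X)))
        = decim N (N / (a * b)) (a * b) (cconv σab X) := by
  intro X
  obtain ⟨q, hN⟩ := hdvd
  have hM : N / b = 2 * a * q := by
    rw [hN, show 2 * a * b * q = (2 * a * q) * b by ring]; exact Nat.mul_div_cancel _ hb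
  have hNM : N = b * (N / b) := by rw [hM, hN]; ring
  funext k
  simp only [decim]
  have hk : ((b * ((a * k.val : ℕ) : ZMod (N / b)).val : ℕ) : ZMod N)
      = ((a * b * k.val : ℕ) : ZMod N) := by
    generalize k.val = v
    rw [ZMod.natCast_eq_natCast_iff, ZMod.val_natCast, mul_comm a b, mul_assoc]
    have : b * (a * v % (N / b)) ≡ b * (a * v) [MOD b * (N / b)] :=
      Nat.ModEq.mul_left' _ (Nat.mod_modEq _ _)
    rwa [← hNM] at this
  have hc : ∀ (f : ZMod N → ℂ) (n : ZMod N), cconv f X n = ∑ p, X p * f (n - p) := by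
    intro f n
    refine Fintype.sum_equiv (Equiv.subLeft n) _ _ fun m => ?_
    simp [mul_comm]
  rw [hc]
  unfold cconv at hc ⊢
  simp only [decim, hc, aux_cast N (N / b) b hNM, hk, Finset.mul_sum]
  rw [Finset.sum_comm]
  refine Finset.sum_congr rfl fun p _ => ?_
  rw [← aux_kernel N (N / b) a b q ha hb hN hM σb hσb σa hσa σab hσab, Finset.mul_sum]
  refine Finset.sum_congr rfl fun m _ => ?_
  rw [sub_right_comm]
  ring


end
end
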